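/- An element A ∈ SL(n, ℂ) is c-reversible (conjugate in GL(n,ℂ) to (conj A)⁻¹) if and only if the multiset of Jordan blocks of A is invariant under the map J(λ, m) ↦ J(conj(λ)⁻¹, m); equivalently, the blocks partition into pairs {J(λ,m), J(conj(λ)⁻¹, m)} with |λ| ≠ 1 and singletons J(μ, m) with |μ| = 1. -/

import Mathlib

open Matrix

/-- The `m × m` Jordan block with eigenvalue `λ`. -/
def jordanBlock (lam : ℂ) (m : ℕ) : Matrix (Fin m) (Fin m) ℂ :=
  Matrix.of fun i j => if (j : ℕ) = i then lam else if (j : ℕ) = i + 1 then 1 else 0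

abbrev JD {k : ℕ} (lams : Fin k → ℂ) (ms : Fin k → ℕ) :
    Matrix (Σ i : Fin k, Fin (ms i)) (Σ i : Fin k, Fin (ms i)) ℂ :=
  Matrix.blockDiagonal' fun i => jordanBlock (lams i) (ms i)

def ext0 {k : ℕ} {ms : Fin k → ℕ} (x : (Σ i : Fin k, Fin (ms i)) → ℂ) (i : Fin k) (l : ℕ) : ℂ :=
  if h : l < ms i then x ⟨i, ⟨l, h⟩⟩ else 0

lemma ext0_step {k : ℕ} (lams : Fin k → ℂ) (ms : Fin k → ℕ) (μ : ℂ)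
    (x : (Σ i : Fin k, Fin (ms i)) → ℂ) (i : Fin k) (l : ℕ) :
    ext0 ((JD lams ms - μ • 1) *ᵥ x) i l = (lams i - μ) * ext0 x i l + ext0 x i (l+1) := by
  unfold ext0
  by_cases h : l < ms i
  · simp only [h, dite_true]
    rw [Matrix.sub_mulVec, Matrix.smul_mulVec, Matrix.one_mulVec]
    simp only [Pi.sub_apply, Pi.smul_apply, smul_eq_mul, sub_mul, Matrix.mulVec, dotProduct]
    rw [Fintype.sum_sigma, Finset.sum_eq_single i]
    · simp only [Matrix.blockDiagonal'_apply_eq, jordanBlock, Matrix.of_apply]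
      have : ∀ c : Fin (ms i), (if (c:ℕ) = l then lams i else if (c:ℕ) = l+1 then 1 else 0) * x ⟨i,c⟩
         = (if c = ⟨l,h⟩ then lams i * x ⟨i,c⟩ else 0) + (if (c:ℕ) = l+1 then x ⟨i,c⟩ else 0) := by
        intro c
        simp only [Fin.ext_iff]
        split_ifs <;> first | omega | simp
      simp only [this, Finset.sum_add_distrib, Finset.sum_ite_eq', Finset.mem_univ, if_true]
      have h2 : (∑ c : Fin (ms i), if (c:ℕ) = l+1 then x ⟨i,c⟩ else 0) = if h : l+1 < ms i then x ⟨i,⟨l+1,h⟩⟩ else 0 := by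
        split_ifs with h'
        · rw [Finset.sum_eq_single ⟨l+1,h'⟩]
          · simp
          · intro b _ hb
            rw [if_neg]; intro hh; exact hb (Fin.ext hh)
          · simp
        · apply Finset.sum_eq_zero
          intro c _
          rw [if_neg]; omega
      rw [h2]; ring
    · intro b _ hb
      apply Finset.sum_eq_zero
      intro c _
      have := Matrix.blockDiagonal'_apply_ne (fun i => jordanBlock (lams i) (ms i)) ⟨l, h⟩ c (Ne.symm hb)
      exact mul_eq_zero_of_left this _
    · simp
  · have : ¬ (l+1 < ms i) := by omega
    simp [h, this]

lemma ext0_ext {k : ℕ} {ms : Fin k → ℕ} (x : (Σ i : Fin k, Fin (ms i)) → ℂ) (a) :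
    x a = ext0 x a.1 a.2 := by
  simp [ext0]

lemma ext0_pow_eq {k : ℕ} (lams : Fin k → ℂ) (ms : Fin k → ℕ) (μ : ℂ) (i : Fin k) (hi : lams i = μ) (j : ℕ) :
    ∀ (x : (Σ i : Fin k, Fin (ms i)) → ℂ)  (l : ℕ),
    ext0 (((JD lams ms - μ • 1)^j) *ᵥ x) i l = ext0 x i (l+j) := by
  induction j with
  | zero => simp
  | succ j ih =>
    intro x l
    rw [pow_succ, ← Matrix.mulVec_mulVec, ih, ext0_step, hi]
    simp [add_assoc]

lemma ext0_pow_ne {k : ℕ} (lams : Fin k → ℂ) (ms : Fin k → ℕ) (μ : ℂ) (i : Fin k) (hi : lams i ≠ μ) (j : ℕ) :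
    ∀ (x : (Σ i : Fin k, Fin (ms i)) → ℂ),
    (∀ l, ext0 (((JD lams ms - μ • 1)^j) *ᵥ x) i l = 0) ↔ ∀ l, ext0 x i l = 0 := by
  induction j with
  | zero => simp
  | succ j ih =>
    intro x
    rw [pow_succ, ← Matrix.mulVec_mulVec, ih]
    simp only [ext0_step]
    constructor
    · intro h
      have : ∀ d l, ms i ≤ l + d → ext0 x i l = 0 := by
        intro d
        induction d with
        | zero => intro l hl; rw [ext0, dif_neg (by omega)]
        | succ d ihd =>
          intro l hl
          have h1 := h l
          rw [ihd (l+1) (by omega), add_zero] at h1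
          exact (mul_eq_zero.1 h1).resolve_left (sub_ne_zero.2 hi)
      intro l
      exact this (ms i) l (by omega)
    · intro h l
      simp [h]

lemma JD_rank {k : ℕ} (lams : Fin k → ℂ) (ms : Fin k → ℕ) (μ : ℂ) (j : ℕ) :
    ((JD lams ms - μ • 1)^j).rank + ∑ i, (if lams i = μ then min (ms i) j else 0)
      = Fintype.card (Σ i : Fin k, Fin (ms i)) := by
  classical
  set p : (Σ i : Fin k, Fin (ms i)) → Prop := fun a => ¬ (lams a.1 = μ ∧ (a.2 : ℕ) < j)
  let R : ((Σ i : Fin k, Fin (ms i)) → ℂ) →ₗ[ℂ] ({a // p a} → ℂ) := LinearMap.funLeft ℂ ℂ Subtype.val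
  have hR : Function.Surjective R := LinearMap.funLeft_surjective_of_injective _ _ _ Subtype.val_injective
  have hk : LinearMap.ker R = LinearMap.ker (((JD lams ms - μ • 1)^j).mulVecLin) := by
    ext x
    rw [LinearMap.mem_ker, LinearMap.mem_ker, Matrix.mulVecLin_apply]
    constructor
    · intro h
      have h' : ∀ a, p a → x a = 0 := fun a ha => congrFun h ⟨a, ha⟩
      funext a
      rw [ext0_ext (((JD lams ms - μ • 1)^j) *ᵥ x) a]
      by_cases ha : lams a.1 = μ
      · rw [ext0_pow_eq _ _ _ _ ha, ext0]
        split_ifs with hl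
        · rw [h']; rfl
          simp [p]
        · rfl
      · refine (ext0_pow_ne _ _ _ _ ha j x).2 ?_ _
        intro l
        rw [ext0]
        split_ifs with hl
        · exact h' _ (by simp [p, ha])
        · rfl
    · intro h
      funext ⟨a, ha⟩
      change x a = 0
      by_cases hl : lams a.1 = μ
      · have hj : j ≤ a.2 := by simpa [p, hl] using ha
        have := ext0_pow_eq lams ms μ a.1 hl j x (a.2 - j)
        rw [h, Nat.sub_add_cancel hj, ← ext0_ext] at this
        rw [← this]; simp [ext0]
      · rw [ext0_ext x a]
        refine (ext0_pow_ne _ _ _ _ hl j x).1 ?_ _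
        rw [h]; simp [ext0]
  have h1 := LinearMap.finrank_range_add_finrank_ker R
  have h2 := LinearMap.finrank_range_add_finrank_ker (((JD lams ms - μ • 1)^j).mulVecLin)
  rw [LinearMap.range_eq_top.2 hR, finrank_top, hk] at h1
  simp only [Module.finrank_fintype_fun_eq_card] at h1 h2
  have h3 : Fintype.card {a // ¬ p a} = ∑ i, (if lams i = μ then min (ms i) j else 0) := by
    rw [Fintype.card_subtype, Finset.card_filter, Fintype.sum_sigma]
    apply Finset.sum_congr rfl
    intro i _
    by_cases hi : lams i = μ
    · simp only [p, hi, true_and, not_not, if_true]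
      rw [← Finset.card_filter]
      have := Fin.card_filter_val_lt (n := ms i) (m := j)
      rw [this]
    · simp [p, hi]
  have h4 := Fintype.card_subtype_compl p
  have h5 := Fintype.card_subtype_le p
  unfold Matrix.rank
  omega

lemma lemC {k k' : ℕ} (l : Fin k → ℂ) (m : Fin k → ℕ) (l' : Fin k' → ℂ) (m' : Fin k' → ℕ)
    (hm : ∀ i, 0 < m i) (hm' : ∀ i, 0 < m' i)
    (h : ∀ μ j, ∑ i, (if l i = μ then min (m i) j else 0) = ∑ i, (if l' i = μ then min (m' i) j else 0)) :
    ∃ e : Fin k ≃ Fin k', ∀ i, l' (e i) = l i ∧ m' (e i) = m i := by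
  classical
  have key : ∀ {k : ℕ} (l : Fin k → ℂ) (m : Fin k → ℕ) (μ : ℂ) (r : ℕ),
      Fintype.card {i // (l i, m i) = (μ, r+1)} + ∑ i, (if l i = μ then min (m i) r else 0)
       + ∑ i, (if l i = μ then min (m i) (r+2) else 0)
       = 2 * ∑ i, (if l i = μ then min (m i) (r+1) else 0) := by
    intro k l m μ r
    rw [Fintype.card_subtype, Finset.card_filter, ← Finset.sum_add_distrib, ← Finset.sum_add_distrib, Finset.mul_sum]
    apply Finset.sum_congr rfl
    intro i _
    simp only [Prod.mk.injEq]
    by_cases h1 : l i = μ <;> by_cases h2 : m i = r + 1 <;> simp [h1, h2] <;> omega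
  have hc : ∀ c : ℂ × ℕ, Nonempty ({i // (l i, m i) = c} ≃ {i // (l' i, m' i) = c}) := by
    rintro ⟨μ, r⟩
    rw [← Fintype.card_eq]
    cases r with
    | zero =>
      have h1 : IsEmpty {i // (l i, m i) = (μ, 0)} := ⟨fun ⟨i, hi⟩ => by
        have := hm i; simp at hi; omega⟩
      have h2 : IsEmpty {i // (l' i, m' i) = (μ, 0)} := ⟨fun ⟨i, hi⟩ => by
        have := hm' i; simp at hi; omega⟩
      rw [Fintype.card_eq_zero, Fintype.card_eq_zero]
    | succ r =>
      have a := key l m μ r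
      have b := key l' m' μ r
      rw [h, h, h] at a
      omega
  let E := fun c => (hc c).some
  refine ⟨Equiv.ofFiberEquiv (f := fun i => (l i, m i)) (g := fun i => (l' i, m' i)) E, fun i => ?_⟩
  have := Equiv.ofFiberEquiv_map E i
  simpa using this

open Polynomial in
lemma quotBasis (a : ℂ) (m : ℕ) (I : Ideal ℂ[X]) (hI : I = Ideal.span {(X - C a)^m}) :
    ∃ b : Module.Basis (Fin m) ℂ (ℂ[X] ⧸ I), ∀ l : Fin m,
      b l = Ideal.Quotient.mk I ((X - C a)^(m - 1 - (l:ℕ))) := by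
  subst hI
  set I := Ideal.span {(X - C a)^m}
  have hli : LinearIndependent ℂ (fun l : Fin m => (Ideal.Quotient.mk I ((X - C a)^(m - 1 - (l:ℕ))) : ℂ[X] ⧸ I)) := by
    rw [Fintype.linearIndependent_iff]
    intro g hg l0
    have h1 : Ideal.Quotient.mk I (∑ l : Fin m, C (g l) * (X - C a)^(m - 1 - (l:ℕ))) = 0 := by
      rw [map_sum, ← hg]
      apply Finset.sum_congr rfl
      intro l _
      rw [← Polynomial.smul_eq_C_mul]
      rfl
    rw [Ideal.Quotient.eq_zero_iff_mem, Ideal.mem_span_singleton] at h1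
    have h2 := map_dvd (Polynomial.taylorAlgHom a) h1
    simp only [map_pow, map_sub, map_sum, map_mul, taylorAlgHom_apply, taylor_X, taylor_C, add_sub_cancel_right] at h2
    rw [X_pow_dvd_iff] at h2
    have h3 := h2 (m - 1 - l0) (by omega)
    rw [finsetSum_coeff, Finset.sum_eq_single l0] at h3
    · simpa using h3
    · intro b _ hb
      rw [coeff_C_mul_X_pow, if_neg]
      intro h; apply hb; ext; omega
    · simp
  have hcard : Fintype.card (Fin m) = Module.finrank ℂ (ℂ[X] ⧸ I) := by
    rw [finrank_quotient_span_eq_natDegree, natDegree_pow, natDegree_X_sub_C]; simp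
  have : Module.Finite ℂ (ℂ[X] ⧸ I) := 
    ((monic_X_sub_C a).pow m).finite_quotient
  refine ⟨basisOfLinearIndependentOfCardEqFinrank' _ hli hcard, fun l => by simp⟩

open Polynomial DirectSum in
lemma exists_basis0 {V : Type} [AddCommGroup V] [Module ℂ V] [Module.Finite ℂ V] (f : Module.End ℂ V) :
    ∃ (ι : Type) (_ : Fintype ι) (lams : ι → ℂ) (ms : ι → ℕ) (b : Module.Basis (Σ i, Fin (ms i)) ℂ V),
      ∀ i (l : Fin (ms i)), f (b ⟨i, l⟩) = lams i • b ⟨i, l⟩ +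
        if h : 0 < (l : ℕ) then b ⟨i, ⟨l - 1, by omega⟩⟩ else 0 := by
  classical
  have htors : Module.IsTorsion ℂ[X] (Module.AEval' f) := by
    intro x
    refine ⟨⟨minpoly ℂ f, mem_nonZeroDivisors_of_ne_zero (minpoly.ne_zero (Algebra.IsIntegral.isIntegral f))⟩, ?_⟩
    obtain ⟨v, rfl⟩ := (Module.AEval'.of f).surjective x
    change (minpoly ℂ f) • (Module.AEval'.of f v) = 0
    have := Module.AEval.of_aeval_smul (R := ℂ) (M := V) f (minpoly ℂ f) v
    rw [minpoly.aeval, zero_smul, map_zero] at this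
    exact this.symm
  obtain ⟨ι, hι, p, hp, e, ⟨Φ⟩⟩ := Module.equiv_directSum_of_isTorsion htors
  have ha : ∀ i, ∃ a, (ℂ[X] ∙ p i ^ e i : Ideal ℂ[X]) = Ideal.span {(X - C a)^(e i)} := by
    intro i
    obtain ⟨a, ha⟩ := IsAlgClosed.exists_root (p i) (by
      rw [IsAlgClosed.degree_eq_one_of_irreducible ℂ (hp i)]; simp)
    refine ⟨a, ?_⟩
    change Ideal.span _ = _
    rw [Ideal.span_singleton_eq_span_singleton]
    apply Associated.pow_pow
    exact ((irreducible_X_sub_C a).associated_of_dvd (hp i) (dvd_iff_isRoot.2 ha)).symm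
  choose a ha using ha
  choose B hB using fun i => quotBasis (a i) (e i) _ (ha i)
  let M : ι → Type := fun i => ℂ[X] ⧸ (ℂ[X] ∙ p i ^ e i)
  let BB : Module.Basis (Σ i, Fin (e i)) ℂ (∀ i, ℂ[X] ⧸ (ℂ[X] ∙ p i ^ e i)) := Pi.basis B
  let Φ' := Φ.trans (DirectSum.linearEquivFunOnFintype ℂ[X] ι (fun i => ℂ[X] ⧸ (ℂ[X] ∙ p i ^ e i)))
  let Ψ : V ≃ₗ[ℂ] (∀ i, ℂ[X] ⧸ (ℂ[X] ∙ p i ^ e i)) := (Module.AEval'.of f).trans (Φ'.restrictScalars ℂ)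
  have hΨ : ∀ v, Ψ (f v) = (X : ℂ[X]) • Ψ v := by
    intro v
    change Φ' (Module.AEval'.of f (f v)) = (X : ℂ[X]) • Φ' (Module.AEval'.of f v)
    rw [← Module.AEval'.X_smul_of, map_smul]
  refine ⟨ι, hι, a, e, BB.map Ψ.symm, ?_⟩
  intro i l
  apply Ψ.injective
  have hBB : ∀ i l, BB ⟨i, l⟩ = Pi.single i (B i l) := by
    intro i l
    exact Pi.basis_apply B ⟨i, l⟩
  have h5 : (X : ℂ[X]) • B i l = a i • B i l + if h : 0 < (l : ℕ) then B i ⟨l - 1, by omega⟩ else 0 := by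
    have h4 : a i • B i l = (C (a i)) • B i l := by
      rw [← algebraMap_smul ℂ[X] (a i)]; rfl
    rw [h4, ← sub_eq_iff_eq_add', ← sub_smul, hB]
    split_ifs with h
    · rw [hB]
      change Ideal.Quotient.mk _ ((X - C (a i)) * _) = _
      rw [← pow_succ']
      congr 2
      simp only
      omega
    · change Ideal.Quotient.mk _ ((X - C (a i)) * _) = _
      rw [← pow_succ', Ideal.Quotient.eq_zero_iff_mem, ha, Ideal.mem_span_singleton]
      apply pow_dvd_pow
      omega
  have h3 : Ψ (if h : 0 < (l : ℕ) then (BB.map Ψ.symm) ⟨i, ⟨l - 1, by omega⟩⟩ else 0) = 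
     Pi.single i (if h : 0 < (l : ℕ) then B i ⟨l - 1, by omega⟩ else 0) := by
    split_ifs <;> simp [hBB]
  rw [hΨ, map_add, map_smul, h3]
  simp only [Module.Basis.map_apply, LinearEquiv.apply_symm_apply, hBB]
  rw [← Pi.single_smul, ← Pi.single_smul, ← Pi.single_add, h5]

lemma exists_basis1 {V : Type} [AddCommGroup V] [Module ℂ V] [Module.Finite ℂ V] (f : Module.End ℂ V) :
    ∃ (k : ℕ) (lams : Fin k → ℂ) (ms : Fin k → ℕ) (b : Module.Basis (Σ i, Fin (ms i)) ℂ V),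
      (∀ i, 0 < ms i) ∧
      ∀ i (l : Fin (ms i)), f (b ⟨i, l⟩) = lams i • b ⟨i, l⟩ +
        if h : 0 < (l : ℕ) then b ⟨i, ⟨l - 1, by omega⟩⟩ else 0 := by
  classical
  obtain ⟨ι, hι, lams, ms, b, hb⟩ := exists_basis0 f
  let s : Fin (Fintype.card {i // 0 < ms i}) ≃ {i // 0 < ms i} := (Fintype.equivFin _).symm
  let E : (Σ i, Fin (ms i)) ≃ (Σ i, Fin (ms (s i).1)) :=
    { toFun := fun a => ⟨s.symm ⟨a.1, by have := a.2.2; omega⟩, Fin.cast (by simp) a.2⟩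
      invFun := fun a => ⟨(s a.1).1, a.2⟩
      left_inv := by
        rintro ⟨i, l⟩
        have : ∀ (j : ι) (h : j = i) (h' : ms i = ms j), (⟨j, Fin.cast h' l⟩ : Σ i, Fin (ms i)) = ⟨i, l⟩ := by
          rintro j rfl h'; rfl
        exact this _ (by simp) (by simp)
      right_inv := by
        rintro ⟨i, l⟩
        have : ∀ j (h : j = i) (h' : ms (s i).1 = ms (s j).1), (⟨j, Fin.cast h' l⟩ : Σ i, Fin (ms (s i).1)) = ⟨i, l⟩ := by
          rintro j rfl h'; rfl
        exact this _ (by simp) (by simp) }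
  refine ⟨_, fun i => lams (s i).1, fun i => ms (s i).1, b.reindex E, fun i => (s i).2, ?_⟩
  intro i l
  simp only [Module.Basis.reindex_apply]
  exact hb _ _

lemma exists_jordan (n : ℕ) (A : Matrix (Fin n) (Fin n) ℂ) :
    ∃ (k : ℕ) (lams : Fin k → ℂ) (ms : Fin k → ℕ)
        (e : (Σ i : Fin k, Fin (ms i)) ≃ Fin n)
        (Q : Matrix (Fin n) (Fin n) ℂ), (∀ i, 0 < ms i) ∧ IsUnit Q ∧
        A = Q * (Matrix.reindex e e (JD lams ms)) * Q⁻¹ := by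
  obtain ⟨k, lams, ms, b, hpos, hb⟩ := exists_basis1 (Matrix.toLin' A)
  have e : (Σ i : Fin k, Fin (ms i)) ≃ Fin n := 
    Fintype.equivOfCardEq (by rw [← Module.finrank_eq_card_basis b]; simp)
  let b' := b.reindex e
  let c := Pi.basisFun ℂ (Fin n)
  have hM : LinearMap.toMatrix b b (Matrix.toLin' A) = JD lams ms := by
    ext ⟨i, l⟩ ⟨i', l'⟩
    rw [LinearMap.toMatrix_apply, hb]
    by_cases hi : i = i'
    · subst hi
      rw [JD, Matrix.blockDiagonal'_apply_eq, jordanBlock, Matrix.of_apply]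
      split_ifs <;> simp [Finsupp.single_apply, Fin.ext_iff] <;> try omega
      all_goals split_ifs <;> first | omega | simp
    · rw [JD, Matrix.blockDiagonal'_apply_ne _ _ _ hi]
      split_ifs <;> simp [Ne.symm hi]
  have hM' : LinearMap.toMatrix b' b' (Matrix.toLin' A) = Matrix.reindex e e (JD lams ms) := by
    rw [← hM]
    ext i j
    simp [b', LinearMap.toMatrix_apply]
  have h1 := basis_toMatrix_mul_linearMap_toMatrix_mul_basis_toMatrix c b' c b' (Matrix.toLin' A)
  have h2 : c.toMatrix b' * b'.toMatrix c = 1 := Module.Basis.toMatrix_mul_toMatrix_flip _ _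
  have h3 : LinearMap.toMatrix c c (Matrix.toLin' A) = A := by
    exact (congrFun (congrArg DFunLike.coe LinearMap.toMatrix_eq_toMatrix') _).trans (LinearMap.toMatrix'_toLin' A)
  refine ⟨k, lams, ms, e, c.toMatrix b', hpos, IsUnit.of_mul_eq_one _ h2, ?_⟩
  rw [Matrix.inv_eq_right_inv h2, ← hM', h1, h3]

lemma perm_sim {n : ℕ} (π : Fin n ≃ Fin n) (M : Matrix (Fin n) (Fin n) ℂ) :
    ∃ P : Matrix (Fin n) (Fin n) ℂ, IsUnit P ∧ Matrix.reindex π π M = P * M * P⁻¹ := by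
  have h : (1 : Matrix (Fin n) (Fin n) ℂ).submatrix π.symm id * (1 : Matrix (Fin n) (Fin n) ℂ).submatrix id π.symm = 1 := by
    rw [Matrix.submatrix_mul _ _ _ id _ Function.bijective_id |>.symm]
    simp
  refine ⟨(1 : Matrix (Fin n) (Fin n) ℂ).submatrix π.symm id, IsUnit.of_mul_eq_one _ h, ?_⟩
  rw [Matrix.inv_eq_right_inv h]
  ext i j
  simp [Matrix.mul_apply, Matrix.one_apply]

lemma JD_sim {n k k' : ℕ} (l : Fin k → ℂ) (m : Fin k → ℕ) (l' : Fin k' → ℂ) (m' : Fin k' → ℕ)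
    (e : (Σ i, Fin (m i)) ≃ Fin n) (e' : (Σ i, Fin (m' i)) ≃ Fin n)
    (s : Fin k ≃ Fin k') (hs : ∀ i, l' (s i) = l i ∧ m' (s i) = m i) :
    ∃ P : Matrix (Fin n) (Fin n) ℂ, IsUnit P ∧
      Matrix.reindex e' e' (JD l' m') = P * Matrix.reindex e e (JD l m) * P⁻¹ := by
  let S : (Σ i, Fin (m i)) ≃ (Σ i, Fin (m' i)) :=
    Equiv.sigmaCongr s (fun i => finCongr (hs i).2.symm)
  have hS : ∀ x y, JD l' m' (S x) (S y) = JD l m x y := by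
    rintro ⟨i, a⟩ ⟨j, b⟩
    change Matrix.blockDiagonal' (fun i => jordanBlock (l' i) (m' i)) ⟨s i, Fin.cast (hs i).2.symm a⟩ ⟨s j, Fin.cast (hs j).2.symm b⟩ = Matrix.blockDiagonal' _ _ _
    by_cases hij : i = j
    · subst hij
      rw [Matrix.blockDiagonal'_apply_eq, Matrix.blockDiagonal'_apply_eq]
      simp [jordanBlock, (hs i).1]
    · rw [Matrix.blockDiagonal'_apply_ne _ _ _ hij, Matrix.blockDiagonal'_apply_ne _ _ _ (by simpa using hij)]
  obtain ⟨P, hP, h⟩ := perm_sim (e.symm.trans (S.trans e')) (Matrix.reindex e e (JD l m))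
  refine ⟨P, hP, ?_⟩
  rw [← h]
  ext i j
  simp [Matrix.reindex_apply, Matrix.submatrix_apply, ← hS]

lemma rank_sim {n : ℕ} (P M : Matrix (Fin n) (Fin n) ℂ) (hP : IsUnit P) (μ : ℂ) (j : ℕ) :
    ((P * M * P⁻¹ - μ • 1)^j).rank = ((M - μ • 1)^j).rank := by
  have hd := (Matrix.isUnit_iff_isUnit_det P).1 hP
  have h1 : P * P⁻¹ = 1 := Matrix.mul_nonsing_inv _ hd
  have h1' : P⁻¹ * P = 1 := Matrix.nonsing_inv_mul _ hd
  have h2 : P * M * P⁻¹ - μ • 1 = P * (M - μ • 1) * P⁻¹ := by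
    simp [mul_sub, sub_mul, h1]
  have h3 : (P * (M - μ • 1) * P⁻¹)^j = P * (M - μ • 1)^j * P⁻¹ := by
    induction j with
    | zero => simp [h1]
    | succ j ih => rw [pow_succ, ih, pow_succ]; simp only [Matrix.mul_assoc]; rw [← Matrix.mul_assoc P⁻¹ P, h1', Matrix.one_mul]
  rw [h2, h3, Matrix.rank_mul_eq_left_of_isUnit_det, Matrix.rank_mul_eq_right_of_isUnit_det _ _ hd]
  rw [← Matrix.isUnit_iff_isUnit_det]
  exact IsUnit.of_mul_eq_one _ h1'

lemma rank_reindexJ {n k : ℕ} (l : Fin k → ℂ) (m : Fin k → ℕ)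
    (e : (Σ i, Fin (m i)) ≃ Fin n) (μ : ℂ) (j : ℕ) :
    ((Matrix.reindex e e (JD l m) - μ • 1)^j).rank = ((JD l m - μ • 1)^j).rank := by
  have : (Matrix.reindex e e (JD l m) - μ • 1)^j = Matrix.reindex e e ((JD l m - μ • 1)^j) := by
    change _ = Matrix.reindexAlgEquiv ℂ ℂ e ((JD l m - μ • 1)^j)
    rw [map_pow, map_sub, map_smul, map_one]
    rfl
  rw [this, Matrix.rank_reindex]

lemma rank_tau {n : ℕ} (A : Matrix (Fin n) (Fin n) ℂ) (hA : A.det = 1) (μ : ℂ) (j : ℕ) :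
    (((A.map (starRingEnd ℂ))⁻¹ - (starRingEnd ℂ μ)⁻¹ • 1)^j).rank = ((A - μ • 1)^j).rank := by
  set B := A.map (starRingEnd ℂ) with hB
  have hBd : B.det = 1 := by
    have := (RingHom.map_det (starRingEnd ℂ) A)
    rw [hA, map_one] at this
    exact this.symm
  have hBu : IsUnit B.det := by rw [hBd]; exact isUnit_one
  have hBi : B⁻¹ * B = 1 := Matrix.nonsing_inv_mul _ hBu
  have hB' : B * B⁻¹ = 1 := Matrix.mul_nonsing_inv _ hBu
  have hu : IsUnit A := (Matrix.isUnit_iff_isUnit_det A).2 (by rw [hA]; exact isUnit_one)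
  have hiu : IsUnit B⁻¹ := IsUnit.of_mul_eq_one _ hBi
  by_cases hμ : μ = 0
  · subst hμ
    simp only [map_zero, _root_.inv_zero, zero_smul, sub_zero]
    rw [Matrix.rank_of_isUnit _ (hu.pow j), Matrix.rank_of_isUnit _ (hiu.pow j)]
  · have hc : starRingEnd ℂ μ ≠ 0 := by simpa using hμ
    set ν := starRingEnd ℂ μ
    have h1 : B⁻¹ - ν⁻¹ • 1 = (-(ν⁻¹)) • B⁻¹ * (B - ν • 1) := by
      rw [mul_sub, smul_mul_assoc, hBi, mul_smul_comm, mul_one, smul_smul, mul_neg, mul_inv_cancel₀ hc]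
      simp; abel
    have hcomm : Commute ((-(ν⁻¹)) • B⁻¹) (B - ν • 1) := by
      apply Commute.smul_left
      apply Commute.sub_right
      · change _ = _; rw [hBi, hB']
      · apply Commute.smul_right; exact Commute.one_right _
    have hU : IsUnit ((-(ν⁻¹)) • B⁻¹) := by
      refine IsUnit.of_mul_eq_one (-ν • B) ?_
      rw [smul_mul_smul_comm, hBi]; simp [hc]
    rw [h1, hcomm.mul_pow, Matrix.rank_mul_eq_right_of_isUnit_det _ _ ((Matrix.isUnit_iff_isUnit_det _).1 (hU.pow j))]
    have h2 : (B - ν • 1)^j = (((A - μ • 1)^j)ᴴ)ᵀ := by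
      rw [Matrix.conjTranspose_pow, Matrix.transpose_pow]
      congr 1
      ext a b
      simp [hB, ν, Matrix.one_apply, eq_comm]
    open ComplexOrder in
    rw [h2, Matrix.rank_transpose, Matrix.rank_conjTranspose]

lemma jordan_rank {n k : ℕ} (A : Matrix (Fin n) (Fin n) ℂ) (l : Fin k → ℂ) (m : Fin k → ℕ)
    (e : (Σ i, Fin (m i)) ≃ Fin n) (Q : Matrix (Fin n) (Fin n) ℂ) (hQ : IsUnit Q)
    (h : A = Q * (Matrix.reindex e e (JD l m)) * Q⁻¹) (μ : ℂ) (j : ℕ) :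
    ((A - μ • 1)^j).rank + ∑ i, (if l i = μ then min (m i) j else 0) = n := by
  rw [h, rank_sim _ _ hQ, rank_reindexJ, JD_rank, Fintype.card_congr e, Fintype.card_fin]

lemma tau_tau (z : ℂ) : (starRingEnd ℂ ((starRingEnd ℂ z)⁻¹))⁻¹ = z := by
  simp

lemma tau_iff (z w : ℂ) : (starRingEnd ℂ z)⁻¹ = w ↔ z = (starRingEnd ℂ w)⁻¹ := by
  constructor
  · rintro rfl; simp
  · rintro rfl; simp

lemma conj_symm {n : ℕ} {A J Q : Matrix (Fin n) (Fin n) ℂ} (hQ : IsUnit Q) (h : A = Q * J * Q⁻¹) :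
    J = Q⁻¹ * A * Q := by
  have hd := (Matrix.isUnit_iff_isUnit_det Q).1 hQ
  rw [h]
  simp only [Matrix.mul_assoc]
  rw [Matrix.nonsing_inv_mul _ hd, ← Matrix.mul_assoc, Matrix.nonsing_inv_mul _ hd]; simp

theorem c_reversible_iff_jordan_blocks_invariant
    (n : ℕ) (A : Matrix (Fin n) (Fin n) ℂ) (hA : A.det = 1) :
    (∃ P : Matrix (Fin n) (Fin n) ℂ, IsUnit P ∧
        P * A * P⁻¹ = (A.map (starRingEnd ℂ))⁻¹) ↔
      ∃ (k : ℕ) (lams : Fin k → ℂ) (ms : Fin k → ℕ)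
        (e : (Σ i : Fin k, Fin (ms i)) ≃ Fin n)
        (Q : Matrix (Fin n) (Fin n) ℂ),
        (∀ i, lams i ≠ 0) ∧ IsUnit Q ∧
        A = Q * (Matrix.reindex e e
              (Matrix.blockDiagonal' fun i => jordanBlock (lams i) (ms i))) * Q⁻¹ ∧
        ∃ σ : Equiv.Perm (Fin k),
          (∀ i, lams (σ i) = (starRingEnd ℂ (lams i))⁻¹) ∧ ∀ i, ms (σ i) = ms i := by
  constructor
  · rintro ⟨P, hP, hPA⟩
    obtain ⟨k, l, m, e, Q, hm, hQ, hJ⟩ := exists_jordan n A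
    have hr := jordan_rank A l m e Q hQ hJ
    have hlne : ∀ i, l i ≠ 0 := by
      intro i hi
      have h1 := hr 0 1
      have hu : IsUnit A := (Matrix.isUnit_iff_isUnit_det A).2 (by rw [hA]; exact isUnit_one)
      rw [zero_smul, sub_zero, pow_one, Matrix.rank_of_isUnit _ hu, Fintype.card_fin] at h1
      have h2 := Finset.single_le_sum (f := fun i => if l i = 0 then min (m i) 1 else 0)
        (fun _ _ => Nat.zero_le _) (Finset.mem_univ i)
      have := hm i
      simp only [hi, if_true] at h2
      omega
    have hsym : ∀ μ j, ((A - (starRingEnd ℂ μ)⁻¹ • 1)^j).rank = ((A - μ • 1)^j).rank := by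
      intro μ j
      rw [← rank_tau A hA μ j, ← hPA, rank_sim _ _ hP]
    obtain ⟨s, hs⟩ := lemC (fun i => (starRingEnd ℂ (l i))⁻¹) m l m hm hm (by
      intro μ j
      simp only [tau_iff]
      have h1 := hr μ j
      have h2 := hr ((starRingEnd ℂ μ)⁻¹) j
      rw [hsym] at h2
      omega)
    exact ⟨k, l, m, e, Q, hlne, hQ, hJ, s, fun i => (hs i).1, fun i => (hs i).2⟩
  · rintro ⟨k, l, m, e, Q, hne, hQ, hJ, σ, h1, h2⟩
    have hr := jordan_rank A l m e Q hQ hJ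
    have hsym : ∀ μ j, ((A - (starRingEnd ℂ μ)⁻¹ • 1)^j).rank = ((A - μ • 1)^j).rank := by
      intro μ j
      have a := hr μ j
      have b := hr ((starRingEnd ℂ μ)⁻¹) j
      have c : ∑ i, (if l i = (starRingEnd ℂ μ)⁻¹ then min (m i) j else 0)
          = ∑ i, (if l i = μ then min (m i) j else 0) := by
        rw [← Equiv.sum_comp σ (fun i => if l i = μ then min (m i) j else 0)]
        simp only [h1, h2, tau_iff]
      omega
    set B := (A.map (starRingEnd ℂ))⁻¹ with hB
    have hAB : ∀ (μ : ℂ) (j : ℕ), ((B - μ • 1)^j).rank = ((A - μ • 1)^j).rank := by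
      intro μ j
      have := rank_tau A hA ((starRingEnd ℂ μ)⁻¹) j
      rw [tau_tau, hsym] at this
      exact this
    obtain ⟨k1, l1, m1, e1, Q1, hm1, hQ1, hJ1⟩ := exists_jordan n A
    obtain ⟨k2, l2, m2, e2, Q2, hm2, hQ2, hJ2⟩ := exists_jordan n B
    obtain ⟨s, hs⟩ := lemC l1 m1 l2 m2 hm1 hm2 (by
      intro μ j
      have a := jordan_rank A l1 m1 e1 Q1 hQ1 hJ1 μ j
      have b := jordan_rank B l2 m2 e2 Q2 hQ2 hJ2 μ j
      rw [hAB] at b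
      omega)
    obtain ⟨P, hP, hPJ⟩ := JD_sim l1 m1 l2 m2 e1 e2 s hs
    have hd1 := (Matrix.isUnit_iff_isUnit_det Q1).1 hQ1
    have hQi : IsUnit Q1⁻¹ := IsUnit.of_mul_eq_one _ (Matrix.nonsing_inv_mul _ hd1)
    refine ⟨Q2 * P * Q1⁻¹, (hQ2.mul hP).mul hQi, ?_⟩
    rw [hJ2, hPJ, conj_symm hQ1 hJ1, Matrix.mul_inv_rev, Matrix.mul_inv_rev,
      Matrix.nonsing_inv_nonsing_inv _ hd1]
    simp only [Matrix.mul_assoc]
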